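/- arXiv:2111.14962 — 2 statements merged into one kernel-verified Lean document; each statement's English description precedes it below -/
import Mathlib

section
/- Let Λ be a symmetric ℓ×ℓ integer matrix and let a = (a₁,…,a_ℓ) ∈ ℤ^ℓ. Suppose there exist a positive integer N and x ∈ ℤ^ℓ such that N·a = Λx. Then there exists a function ω : ℤ^ℓ × {0,1}^ℓ → ℤ such that for all s ∈ ℤ^ℓ, all ε ∈ {0,1}^ℓ and all i with ε_i = 0: (1) ω(s, ε + e_i) = a_i + ω(s, ε), and (2) ω(s + Λe_i, ε + e_i) = ω(s, ε), where e_i is the i-th standard basis vector and Λe_i is the i-th column of Λ. -/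
/-!
The first relation forces `ω (s, ε) = ω (s, 0) + ∑ εᵢ aᵢ`, and the second then asks that
`f s = -ω (s, 0)` grow by `aᵢ` along the `i`-th column of `Λ`. Over `ℚ` the linear functional
`s ↦ ⟨x, s⟩ / N` does this, because `⟨x, Λeᵢ⟩ = N aᵢ`. As its increments along the columns are
integers, rounding it down leaves them unchanged and makes it integer-valued.
-/

open scoped Matrix

/-- The weight `∑ εᵢ aᵢ` of the vertex `ε` of the cube whose edges in direction `i` have
weight `aᵢ`. Vertices are encoded as Boolean vectors, `true` standing for the coordinate `1`. -/
def cubeWeight {ι M : Type*} [Fintype ι] [AddCommMonoid M] (a : ι → M) (ε : ι → Bool) : M :=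
  ∑ i, if ε i then a i else 0

theorem cubeWeight_update_true {ι M : Type*} [Fintype ι] [DecidableEq ι] [AddCommMonoid M]
    (a : ι → M) {ε : ι → Bool} {i : ι} (hi : ε i = false) :
    cubeWeight a (Function.update ε i true) = a i + cubeWeight a ε := by
  let w (j : ι) (b : Bool) : M := if b then a j else 0
  have hwi : w i (ε i) = 0 := by simp [w, hi]
  calc ∑ j, w j (Function.update ε i true j)
      = ∑ j, Function.update (fun j => w j (ε j)) i (a i) j :=
        Finset.sum_congr rfl fun j _ => Function.apply_update w ε i true j
    _ = a i + ∑ j ∈ Finset.univ \ {i}, w j (ε j) :=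
        Finset.sum_update_of_mem (Finset.mem_univ i) _ _
    _ = a i + ∑ j, w j (ε j) := by
        rw [Finset.sdiff_singleton_eq_erase,
          Finset.sum_erase (f := fun j => w j (ε j)) _ hwi]

section

variable {m n : Type*} [Fintype m]

theorem dotProduct_add_col_ediv {Λ : Matrix m n ℤ} {a : n → ℤ} {N : ℤ} {x : m → ℤ}
    (hN : N ≠ 0) (hNa : N • a = x ᵥ* Λ) (s : m → ℤ) (i : n) :
    x ⬝ᵥ (s + Λ.col i) / N = x ⬝ᵥ s / N + a i := by
  have hcol : x ⬝ᵥ Λ.col i = N * a i := (congrFun hNa i).symm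
  rw [dotProduct_add, hcol, Int.add_mul_ediv_left _ _ hN]

/-- The coefficient `ω (s, ε) = ∑ εᵢ aᵢ - ⌊⟨x, s⟩ / N⌋` attached to the Alexander grading `s` and
the cube vertex `ε`. Integer division of `ℤ` is the floor for `0 < N` only; for negative `N` it
is the ceiling, which serves equally well, and `N = 0` gives the junk value `∑ εᵢ aᵢ`. -/
def homologyActionCoeff [Fintype n] (a : n → ℤ) (N : ℤ) (x s : m → ℤ) (ε : n → Bool) : ℤ :=
  cubeWeight a ε - x ⬝ᵥ s / N

variable [DecidableEq n]

theorem homologyActionCoeff_update_true [Fintype n] (a : n → ℤ) (N : ℤ) (x s : m → ℤ)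
    {ε : n → Bool} {i : n} (hi : ε i = false) :
    homologyActionCoeff a N x s (Function.update ε i true) =
      a i + homologyActionCoeff a N x s ε := by
  rw [homologyActionCoeff, cubeWeight_update_true a hi, add_sub_assoc, homologyActionCoeff]

theorem homologyActionCoeff_add_col_update_true [Fintype n] {Λ : Matrix m n ℤ} {a : n → ℤ}
    {N : ℤ} {x : m → ℤ} (hN : N ≠ 0) (hNa : N • a = x ᵥ* Λ) (s : m → ℤ) {ε : n → Bool} {i : n}
    (hi : ε i = false) :
    homologyActionCoeff a N x (s + Λ.col i) (Function.update ε i true) =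
      homologyActionCoeff a N x s ε := by
  rw [homologyActionCoeff_update_true a N x _ hi, homologyActionCoeff,
    dotProduct_add_col_ediv hN hNa, homologyActionCoeff]
  ring

theorem statement_2_general [Finite n] (Λ : Matrix m n ℤ) (a : n → ℤ) (N : ℤ) (hN : N ≠ 0)
    (x : m → ℤ) (hNa : N • a = x ᵥ* Λ) :
    ∃ ω : (m → ℤ) → (n → Bool) → ℤ,
      ∀ (s : m → ℤ) (ε : n → Bool) (i : n), ε i = false →
        (ω s (Function.update ε i true) = a i + ω s ε ∧
          ω (s + Λ.col i) (Function.update ε i true) = ω s ε) := by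
  have := Fintype.ofFinite n
  exact ⟨homologyActionCoeff a N x, fun s _ _ hi =>
    ⟨homologyActionCoeff_update_true a N x s hi,
      homologyActionCoeff_add_col_update_true hN hNa s hi⟩⟩

end

/-- Let `Λ` be a symmetric `ℓ×ℓ` integer matrix and `a ∈ ℤ^ℓ` with
`N • a = Λ x` for some `N ≥ 1` and `x ∈ ℤ^ℓ`.  Then there is a function
`ω : ℤ^ℓ × {0,1}^ℓ → ℤ` such that for all `s`, all `ε` and all `i` with `ε i = 0`:
`ω (s, ε + eᵢ) = aᵢ + ω (s, ε)` and `ω (s + Λeᵢ, ε + eᵢ) = ω (s, ε)`. -/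
theorem statement_2 (ℓ : ℕ) (Λ : Matrix (Fin ℓ) (Fin ℓ) ℤ) (hΛ : Λ.IsSymm)
    (a : Fin ℓ → ℤ) (N : ℕ) (hN : 0 < N) (x : Fin ℓ → ℤ)
    (hNa : (N : ℤ) • a = Λ.mulVec x) :
    ∃ ω : (Fin ℓ → ℤ) → (Fin ℓ → Bool) → ℤ,
      ∀ (s : Fin ℓ → ℤ) (ε : Fin ℓ → Bool) (i : Fin ℓ), ε i = false →
        (ω s (Function.update ε i true) = a i + ω s ε ∧
          ω (s + fun j => Λ j i) (Function.update ε i true) = ω s ε) := by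
  have hNa' : (N : ℤ) • a = x ᵥ* Λ := by
    rw [hNa, ← Matrix.vecMul_transpose, hΛ.eq]
  exact statement_2_general Λ a N (mod_cast hN.ne') x hNa'
end

section
/- Let ℓ = ℓ₀ + ℓ₁ with ℓ₀, ℓ₁ ≥ 1, let Λ be a symmetric ℓ×ℓ integer matrix, and let Λ₀ denote its top-left ℓ₀×ℓ₀ block. Let a = (a₁,…,a_{ℓ₀}) ∈ ℤ^{ℓ₀} and suppose there exist a positive integer N and x ∈ ℤ^{ℓ₀} such that N·a = Λ₀x. Then there exists a function ω : ℤ^ℓ × {0,1}^{ℓ₀} → ℤ such that: (1) ω(s, ε + e_i) = a_i + ω(s, ε) for all s, all ε with ε_i = 0, and all 1 ≤ i ≤ ℓ₀; (2) ω(s + Λe_i, ε + e_i) = ω(s, ε) for all such s, ε, i, where Λe_i is the full i-th column of Λ in ℤ^ℓ; and (3) ω(s ± e_j, ε) = ω(s, ε) for all s, ε and all ℓ₀ < j ≤ ℓ. -/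
/-! A function of the required shape is a function on `ℤ^ℓ` that drops by `aᵢ` along the `i`-th
column of `Λ` and ignores the coordinates of `L₁`, plus the sum of the `aᵢ` over the ones of `ε`.
By symmetry of `Λ₀`, the equation `N • a = Λ₀ x` says that the linear form `s ↦ x ⬝ s|_{L₀}` takes
the value `N aᵢ` on the `i`-th column. Minus this form divided by `N` and rounded down is such a
function, because rounding down commutes with adding an integer. -/

section NullHomotopyCoeff

variable {ι A M : Type*} [Fintype ι]

/-- The sum of `a` over a vertex `ε` of the cube `{0,1}^ι`, read as the subset `{i | εᵢ = 1}`. It is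
the part of the null-homotopy coefficient that depends on the vertex. -/
def vertexSum [AddCommMonoid A] (a : ι → A) (ε : ι → Bool) : A :=
  ∑ i with ε i = true, a i

theorem vertexSum_update_true [DecidableEq ι] [AddCommMonoid A] (a : ι → A) {ε : ι → Bool} {i : ι}
    (hi : ε i = false) : vertexSum a (Function.update ε i true) = a i + vertexSum a ε := by
  have hfilter : ({k | Function.update ε i true k = true} : Finset ι) =
      insert i ({k | ε k = true} : Finset ι) := by
    ext k
    by_cases hk : k = i <;> simp [hk]
  rw [vertexSum, hfilter, Finset.sum_insert (by simp [hi]), vertexSum]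

/-- The coefficient `ω (s, ε)` of the null-homotopy of the class `a`, where `φ` is to take the value
`N aᵢ` on the `i`-th framing vector. The quotient is rounded down. -/
def nullHomotopyCoeff (a : ι → ℤ) (φ : M → ℤ) (N : ℤ) (s : M) (ε : ι → Bool) : ℤ :=
  vertexSum a ε - φ s / N

theorem nullHomotopyCoeff_update_true [DecidableEq ι] (a : ι → ℤ) (φ : M → ℤ) (N : ℤ) (s : M)
    {ε : ι → Bool} {i : ι} (hi : ε i = false) :
    nullHomotopyCoeff a φ N s (Function.update ε i true) = a i + nullHomotopyCoeff a φ N s ε := by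
  rw [nullHomotopyCoeff, vertexSum_update_true a hi, add_sub_assoc, nullHomotopyCoeff]

theorem nullHomotopyCoeff_congr (a : ι → ℤ) {φ : M → ℤ} (N : ℤ) {s t : M} (h : φ s = φ t)
    (ε : ι → Bool) : nullHomotopyCoeff a φ N s ε = nullHomotopyCoeff a φ N t ε := by
  rw [nullHomotopyCoeff, h, nullHomotopyCoeff]

theorem nullHomotopyCoeff_of_eq_add_mul (a : ι → ℤ) {φ : M → ℤ} {N : ℤ} (hN : N ≠ 0) {s t : M}
    {c : ℤ} (h : φ t = φ s + N * c) (ε : ι → Bool) :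
    nullHomotopyCoeff a φ N t ε = nullHomotopyCoeff a φ N s ε - c := by
  rw [nullHomotopyCoeff, h, Int.add_mul_ediv_left _ _ hN, ← sub_sub, nullHomotopyCoeff]

theorem nullHomotopyCoeff_update_true_of_eq_add_mul [DecidableEq ι] {a : ι → ℤ} {φ : M → ℤ} {N : ℤ}
    (hN : N ≠ 0) {s t : M} {ε : ι → Bool} {i : ι} (hi : ε i = false) (h : φ t = φ s + N * a i) :
    nullHomotopyCoeff a φ N t (Function.update ε i true) = nullHomotopyCoeff a φ N s ε := by
  rw [nullHomotopyCoeff_of_eq_add_mul a hN h, nullHomotopyCoeff_update_true a φ N s hi,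
    add_sub_cancel_left]

end NullHomotopyCoeff

section RestrictedDotProduct

variable {ι m R : Type*} [Fintype ι] [CommSemiring R]

/-- The linear form `s ↦ x ⬝ (s ∘ e)` pairing `x` with the coordinates of `s` selected by `e`. For
`e` the inclusion of a sublink it ignores the coordinates of the other components. -/
def restrictedDotProduct (x : ι → R) (e : ι → m) : (m → R) →ₗ[R] R :=
  dotProductBilin R R x ∘ₗ LinearMap.funLeft R R e

theorem restrictedDotProduct_col {n : Type*} (x : ι → R) (e : ι → m) (Λ : Matrix m n R) (j : n) :
    restrictedDotProduct x e (Λ.col j) = Matrix.vecMul x (Λ.submatrix e id) j :=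
  rfl

theorem restrictedDotProduct_single [DecidableEq m] (x : ι → R) {e : ι → m} {j : m}
    (hj : j ∉ Set.range e) (r : R) : restrictedDotProduct x e (Pi.single j r) = 0 := by
  have hrestrict : LinearMap.funLeft R R e (Pi.single j r) = 0 :=
    funext fun k ↦ Pi.single_eq_of_ne (M := fun _ ↦ R) (fun hk ↦ hj ⟨k, hk⟩) r
  rw [restrictedDotProduct, LinearMap.comp_apply, hrestrict, map_zero]

end RestrictedDotProduct

theorem vecMul_eq_mulVec_of_isSymm {n R : Type*} [Fintype n] [NonUnitalCommSemiring R]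
    {A : Matrix n n R} (hA : A.IsSymm) (x : n → R) : Matrix.vecMul x A = A.mulVec x := by
  rw [← Matrix.vecMul_transpose, hA.eq]

theorem natAdd_notMem_range_castAdd {m n : ℕ} (j : Fin n) :
    Fin.natAdd m j ∉ Set.range (Fin.castAdd (m := n) (n := m)) := by
  rintro ⟨k, hk⟩
  exact ((Fin.castAdd_lt n k).trans_le (Fin.le_coe_natAdd m j)).ne (congrArg Fin.val hk)

theorem statement_3_general {ι m : Type*} [Fintype ι] [DecidableEq ι] [DecidableEq m]
    (Λ : Matrix m ι ℤ) (e : ι → m) (a : ι → ℤ) {N : ℤ} (hN : N ≠ 0) (x : ι → ℤ)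
    (hNa : N • a = Matrix.vecMul x (Λ.submatrix e id)) :
    ∃ ω : (m → ℤ) → (ι → Bool) → ℤ,
      (∀ s ε i, ε i = false → ω s (Function.update ε i true) = a i + ω s ε) ∧
      (∀ s ε i, ε i = false → ω (s + Λ.col i) (Function.update ε i true) = ω s ε) ∧
      (∀ s ε, ∀ j ∉ Set.range e,
        ω (s + Pi.single j 1) ε = ω s ε ∧ ω (s - Pi.single j 1) ε = ω s ε) := by
  have hcol (i : ι) : restrictedDotProduct x e (Λ.col i) = N * a i := by
    rw [restrictedDotProduct_col, ← hNa, Pi.smul_apply, smul_eq_mul]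
  refine ⟨nullHomotopyCoeff a (restrictedDotProduct x e) N, ?_, ?_, ?_⟩
  · exact fun s _ _ hi ↦ nullHomotopyCoeff_update_true a _ N s hi
  · exact fun s _ i hi ↦
      nullHomotopyCoeff_update_true_of_eq_add_mul hN hi (by rw [map_add, hcol])
  · intro s ε j hj
    have hsingle := restrictedDotProduct_single x hj 1
    exact ⟨nullHomotopyCoeff_congr a N (by rw [map_add, hsingle, add_zero]) ε,
      nullHomotopyCoeff_congr a N (by rw [map_sub, hsingle, sub_zero]) ε⟩

/-- Let `ℓ = ℓ₀ + ℓ₁` with `ℓ₀, ℓ₁ ≥ 1`, let `Λ` be a symmetric `ℓ×ℓ`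
integer matrix with top-left `ℓ₀×ℓ₀` block `Λ₀`.  Let `a ∈ ℤ^{ℓ₀}` with `N • a = Λ₀ x`
for some `N ≥ 1`, `x ∈ ℤ^{ℓ₀}`.  Then there is `ω : ℤ^ℓ × {0,1}^{ℓ₀} → ℤ` with
(1) `ω (s, ε + eᵢ) = aᵢ + ω (s, ε)` whenever `ε i = 0` (for `i ≤ ℓ₀`);
(2) `ω (s + Λeᵢ, ε + eᵢ) = ω (s, ε)` for such `s, ε, i`, where `Λeᵢ` is the full `i`-th
column of `Λ`; and (3) `ω (s ± e_j, ε) = ω (s, ε)` for all `s, ε` and all `ℓ₀ < j ≤ ℓ`. -/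
theorem statement_3 (ℓ₀ ℓ₁ : ℕ) (h₀ : 1 ≤ ℓ₀) (h₁ : 1 ≤ ℓ₁)
    (Λ : Matrix (Fin (ℓ₀ + ℓ₁)) (Fin (ℓ₀ + ℓ₁)) ℤ) (hΛ : Λ.IsSymm)
    (a : Fin ℓ₀ → ℤ) (N : ℕ) (hN : 0 < N) (x : Fin ℓ₀ → ℤ)
    (hNa : (N : ℤ) • a =
      (Matrix.of fun i j : Fin ℓ₀ => Λ (Fin.castAdd ℓ₁ i) (Fin.castAdd ℓ₁ j)).mulVec x) :
    ∃ ω : (Fin (ℓ₀ + ℓ₁) → ℤ) → (Fin ℓ₀ → Bool) → ℤ,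
      (∀ (s : Fin (ℓ₀ + ℓ₁) → ℤ) (ε : Fin ℓ₀ → Bool) (i : Fin ℓ₀), ε i = false →
        ω s (Function.update ε i true) = a i + ω s ε) ∧
      (∀ (s : Fin (ℓ₀ + ℓ₁) → ℤ) (ε : Fin ℓ₀ → Bool) (i : Fin ℓ₀), ε i = false →
        ω (s + fun j => Λ j (Fin.castAdd ℓ₁ i)) (Function.update ε i true) = ω s ε) ∧
      (∀ (s : Fin (ℓ₀ + ℓ₁) → ℤ) (ε : Fin ℓ₀ → Bool) (j : Fin ℓ₁),
        ω (s + Pi.single (Fin.natAdd ℓ₀ j) 1) ε = ω s ε ∧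
        ω (s - Pi.single (Fin.natAdd ℓ₀ j) 1) ε = ω s ε) := by
  obtain ⟨ω, hω₁, hω₂, hω₃⟩ := statement_3_general (Λ.submatrix id (Fin.castAdd ℓ₁))
    (Fin.castAdd ℓ₁) a (Nat.cast_ne_zero.2 hN.ne') x
    (hNa.trans (vecMul_eq_mulVec_of_isSymm (hΛ.submatrix (Fin.castAdd ℓ₁)) x).symm)
  exact ⟨ω, hω₁, hω₂, fun s ε j ↦ hω₃ s ε _ (natAdd_notMem_range_castAdd j)⟩
end
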